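/- Let G be an antipodal distance-regular graph of diameter 3 which is an antipodal r-cover, with distinct adjacency eigenvalues k > θ₁ > θ₂ > θ₃, and let q ≤ −1 be a real number. Then the q-distance matrix 𝔻_q has exactly three distinct eigenvalues if and only if θ₁ = −r/q − 1. -/

import Mathlib

open Matrix

variable {V : Type*} [Fintype V] [DecidableEq V]

/-- The distance-`i` matrix of a graph: the `(x,y)` entry is 1 if `dist x y = i`, else 0. -/
noncomputable def distM (G : SimpleGraph V) (i : ℕ) : Matrix V V ℝ :=
  Matrix.of fun x y => if G.dist x y = i then (1 : ℝ) else 0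

/-- The `q`-distance matrix `𝔻_q = ∑_{i=1}^D (1 + 1/q + ⋯ + 1/q^{i-1}) • A_i`. -/
noncomputable def qDist (G : SimpleGraph V) (D : ℕ) (q : ℝ) : Matrix V V ℝ :=
  ∑ i ∈ Finset.Icc 1 D, (∑ j ∈ Finset.range i, (1 / q) ^ j) • distM G i

/-- `G` is distance-regular with diameter `D` and intersection numbers `b i`, `c i`
(with `c 1 = 1`): for any vertices `x, y` at distance `i ≤ D`, the number of neighbors
of `y` at distance `i - 1` from `x` is `c i` and the number of neighbors of `y` at
distance `i + 1` from `x` is `b i`. -/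
def IsDRG (G : SimpleGraph V) (D : ℕ) (b c : ℕ → ℕ) : Prop :=
  G.Connected ∧
  (∀ x y : V, G.dist x y ≤ D) ∧
  (∃ x y : V, G.dist x y = D) ∧
  c 1 = 1 ∧
  ∀ i ≤ D, ∀ x y : V, G.dist x y = i →
    ({z : V | G.Adj y z ∧ G.dist x z = i - 1} : Set V).ncard = c i ∧
    ({z : V | G.Adj y z ∧ G.dist x z = i + 1} : Set V).ncard = b i

/-- `a i = k - b i - c i` as a real number, where `k = b 0`. -/
noncomputable def aInt (b c : ℕ → ℕ) (i : ℕ) : ℝ := (b 0 : ℝ) - (b i : ℝ) - (c i : ℝ)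

/-- `G` is antipodal with diameter `D`: being equal or at distance `D` is an equivalence
relation on the vertices. -/
def IsAntipodal (G : SimpleGraph V) (D : ℕ) : Prop :=
  ∀ u v w : V, G.dist u v = D → G.dist u w = D → (v = w ∨ G.dist v w = D)

/-- `G` is an antipodal `r`-cover with diameter `D`: every antipodal class has exactly `r`
elements. -/
def IsAntipodalCover (G : SimpleGraph V) (D r : ℕ) : Prop :=
  IsAntipodal G D ∧ ∀ x : V, ({y : V | y = x ∨ G.dist x y = D} : Set V).ncard = r

/-! In a distance-regular graph the three-term recurrence makes every `Aᵢ` a polynomial `vᵢ(A)`, so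
`𝔻_q` is a polynomial in the symmetric matrix `A` and its spectrum is the image of that of `A`
under `θ ↦ ∑ (1 + 1/q + ⋯ + 1/q^{i-1}) vᵢ(θ)`. For an antipodal `r`-cover of diameter 3, with
intersection array `{k, c₂(r - 1), 1; 1, c₂, k}`, let `f(θ) = θ² + (c₂ - a₁)θ - k`. Then
`v₂(θ) = f(θ)/c₂ - θ` and `v₃(θ) = f(θ)(θ + 1 - k)/(c₂k) - 1`, and the recurrence at `i = 3` says
that every eigenvalue is a root of `(θ - k)(θ + 1)f(θ)`. Since `f(-1) = -c₂r < 0`, the eigenvalue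
`-1` lies strictly between the roots of `f`, so `θ₂ = -1` and `f(θ₁) = f(θ₃) = 0`. For `q ≤ -1`
the images of `k` and of `θ₃` are strictly the largest and the smallest of the four, so there are
exactly three values precisely when the images of `θ₁` and `-1` agree. -/

open Polynomial

section DistanceRegular

variable {W : Type*} {G : SimpleGraph W} {D r i : ℕ} {b c : ℕ → ℕ} {x y : W}

lemma exists_dist_eq_and_dist_eq (hxy : G.Reachable x y) {i j : ℕ} (h : G.dist x y = i + j) :
    ∃ z, G.dist x z = i ∧ G.dist z y = j := by
  obtain ⟨p, hp⟩ := hxy.exists_walk_length_eq_dist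
  have hle_left := SimpleGraph.dist_le (p.take i)
  have hle_right := SimpleGraph.dist_le (p.drop i)
  have htri := (p.take i).reachable.dist_triangle_left y
  rw [p.take_length] at hle_left
  rw [p.drop_length] at hle_right
  exact ⟨p.getVert i, by omega, by omega⟩

namespace IsDRG

lemma connected (hG : IsDRG G D b c) : G.Connected :=
  hG.1

lemma dist_le (hG : IsDRG G D b c) (x y : W) : G.dist x y ≤ D :=
  hG.2.1 x y

lemma exists_dist_eq (hG : IsDRG G D b c) (hi : i ≤ D) : ∃ x y, G.dist x y = i := by
  obtain ⟨x, y, hxy⟩ := hG.2.2.1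
  obtain ⟨z, hz, -⟩ :=
    exists_dist_eq_and_dist_eq (i := i) (j := D - i) (hG.connected.preconnected x y) (by omega)
  exact ⟨x, z, hz⟩

lemma ncard_adj_dist_eq_pred (hG : IsDRG G D b c) (h : G.dist x y = i + 1) :
    {z | G.Adj y z ∧ G.dist x z = i}.ncard = c (i + 1) :=
  (hG.2.2.2.2 (i + 1) (h ▸ hG.dist_le x y) x y h).1

lemma ncard_adj_dist_eq_succ (hG : IsDRG G D b c) (h : G.dist x y = i) :
    {z | G.Adj y z ∧ G.dist x z = i + 1}.ncard = b i :=
  (hG.2.2.2.2 i (h ▸ hG.dist_le x y) x y h).2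

lemma ncard_adj (hG : IsDRG G D b c) (x : W) : {z | G.Adj x z}.ncard = b 0 := by
  simpa using hG.ncard_adj_dist_eq_succ (G.dist_self (v := x))

lemma b_diam (hG : IsDRG G D b c) : b D = 0 := by
  obtain ⟨x, y, hxy⟩ := hG.2.2.1
  have hempty : {z | G.Adj y z ∧ G.dist x z = D + 1} = ∅ :=
    Set.eq_empty_of_forall_notMem fun z hz => by have := hG.dist_le x z; have := hz.2; omega
  rw [← hG.ncard_adj_dist_eq_succ hxy, hempty, Set.ncard_empty]

lemma c_succ_pos [Finite W] (hG : IsDRG G D b c) (hi : i < D) : 0 < c (i + 1) := by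
  obtain ⟨x, y, hxy⟩ := hG.exists_dist_eq (show i + 1 ≤ D from hi)
  obtain ⟨z, hxz, hzy⟩ := exists_dist_eq_and_dist_eq (hG.connected.preconnected x y) hxy
  rw [← hG.ncard_adj_dist_eq_pred hxy, Set.ncard_pos]
  exact ⟨z, (SimpleGraph.dist_eq_one_iff_adj.1 hzy).symm, hxz⟩

lemma b_pos [Finite W] (hG : IsDRG G D b c) (hi : i < D) : 0 < b i := by
  obtain ⟨x, y, hxy⟩ := hG.exists_dist_eq (show i + 1 ≤ D from hi)
  obtain ⟨z, hxz, hzy⟩ := exists_dist_eq_and_dist_eq (hG.connected.preconnected x y) hxy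
  rw [← hG.ncard_adj_dist_eq_succ hxz, Set.ncard_pos]
  exact ⟨y, SimpleGraph.dist_eq_one_iff_adj.1 hzy, hxy⟩

lemma ncard_adj_dist_eq_self [Finite W] (hG : IsDRG G D b c) (h : G.dist x y = i + 1) :
    ({z | G.Adj y z ∧ G.dist x z = i + 1}.ncard : ℝ) = aInt b c (i + 1) := by
  have hsplit : {z | G.Adj y z} = {z | G.Adj y z ∧ G.dist x z = i} ∪
      {z | G.Adj y z ∧ G.dist x z = i + 1} ∪ {z | G.Adj y z ∧ G.dist x z = i + 1 + 1} := by
    ext z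
    have hstep (hz : G.Adj y z) := hz.diff_dist_adj (u := x)
    simp only [Set.mem_union, Set.mem_ofPred_eq]
    grind
  have hcard := hG.ncard_adj y
  rw [hsplit, Set.ncard_union_eq (Set.disjoint_left.2 fun z => by grind),
    Set.ncard_union_eq (Set.disjoint_left.2 fun z => by grind), hG.ncard_adj_dist_eq_pred h,
    hG.ncard_adj_dist_eq_succ h] at hcard
  rw [aInt, ← hcard]
  push_cast
  ring

lemma ncard_sphere_mul [Finite W] (hG : IsDRG G D b c) (x : W) (i : ℕ) :
    {y | G.dist x y = i}.ncard * b i = {y | G.dist x y = i + 1}.ncard * c (i + 1) := by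
  classical
  have := Fintype.ofFinite W
  rw [Set.ncard_eq_toFinset_card', Set.ncard_eq_toFinset_card']
  refine Finset.card_mul_eq_card_mul G.Adj (fun y hy => ?_) fun y hy => ?_
  · rw [← hG.ncard_adj_dist_eq_succ (x := x) (y := y) (by simpa using hy),
      Set.ncard_eq_toFinset_card']
    congr 1
    ext z
    simp [and_comm]
  · rw [← hG.ncard_adj_dist_eq_pred (x := x) (y := y) (by simpa using hy),
      Set.ncard_eq_toFinset_card']
    congr 1
    ext z
    simp [and_comm, G.adj_comm]

end IsDRG

lemma distM_isSelfAdjoint (G : SimpleGraph W) (i : ℕ) : IsSelfAdjoint (distM G i) := by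
  ext x y
  simp [distM, G.dist_comm]

lemma distM_one_mul_distM_apply [Fintype W] (G : SimpleGraph W) (i : ℕ) (x y : W) :
    (distM G 1 * distM G i) x y = {z | G.Adj x z ∧ G.dist y z = i}.ncard := by
  classical
  simp only [distM, Matrix.mul_apply, Matrix.of_apply, SimpleGraph.dist_eq_one_iff_adj,
    G.dist_comm (v := y), ite_zero_mul_ite_zero, mul_one, Finset.sum_boole,
    Set.ncard_eq_toFinset_card', Set.toFinset_ofPred]

/-- The distance polynomials `v₀, v₁, …` of the intersection array `b, c`: the polynomial `vᵢ`
expresses `Aᵢ` in terms of `A` for `i` up to the diameter (beyond it `cᵢ` may be `0`), and is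
defined by the three-term recurrence
`A Aᵢ₊₁ = bᵢ Aᵢ + aᵢ₊₁ Aᵢ₊₁ + cᵢ₊₂ Aᵢ₊₂` solved for `Aᵢ₊₂`. -/
noncomputable def distPoly (b c : ℕ → ℕ) : ℕ → ℝ[X]
  | 0 => 1
  | 1 => X
  | i + 2 => C (c (i + 2) : ℝ)⁻¹ *
      ((X - C (aInt b c (i + 1))) * distPoly b c (i + 1) - C (b i : ℝ) * distPoly b c i)

/-- The eigenvalue of `𝔻_q` on the `θ`-eigenspace of the adjacency matrix of a distance-regular
graph with diameter `D` and intersection numbers `b, c`. -/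
noncomputable def qDistEigenvalue (b c : ℕ → ℕ) (D : ℕ) (q θ : ℝ) : ℝ :=
  ∑ i ∈ Finset.Icc 1 D, (∑ j ∈ Finset.range i, (1 / q) ^ j) * (distPoly b c i).eval θ

lemma spectrum_aeval_of_isSelfAdjoint {R : Type*} [TopologicalSpace R] [Ring R] [StarRing R]
    [Algebra ℝ R] [ContinuousFunctionalCalculus ℝ R IsSelfAdjoint] {a : R} (ha : IsSelfAdjoint a)
    (p : ℝ[X]) : spectrum ℝ (aeval a p) = p.eval '' spectrum ℝ a := by
  rw [← cfc_polynomial p a ha, cfc_map_spectrum ..]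

namespace IsDRG

lemma distM_zero [DecidableEq W] (hG : IsDRG G D b c) : distM G 0 = 1 := by
  ext x y
  simp [distM, Matrix.one_apply, hG.connected.dist_eq_zero_iff]

variable [Fintype W]

lemma distM_one_mul_distM_succ (hG : IsDRG G D b c) (i : ℕ) :
    distM G 1 * distM G (i + 1) =
      (b i : ℝ) • distM G i + aInt b c (i + 1) • distM G (i + 1) +
        (c (i + 2) : ℝ) • distM G (i + 2) := by
  ext x y
  rw [distM_one_mul_distM_apply]
  simp only [distM, Matrix.add_apply, Matrix.smul_apply, Matrix.of_apply, smul_eq_mul,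
    G.dist_comm (u := x) (v := y)]
  by_cases hpred : G.dist y x = i
  · simp [hpred, hG.ncard_adj_dist_eq_succ hpred]
  by_cases hself : G.dist y x = i + 1
  · simp [hself, hG.ncard_adj_dist_eq_self hself]
  by_cases hsucc : G.dist y x = i + 2
  · simp [hsucc, hG.ncard_adj_dist_eq_pred hsucc]
  have hempty : {z | G.Adj x z ∧ G.dist y z = i + 1} = ∅ := by
    refine Set.eq_empty_of_forall_notMem fun z hz => ?_
    have := hz.1.diff_dist_adj (u := y)
    have := hz.2
    omega
  simp [hpred, hself, hsucc, hempty]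

variable [DecidableEq W]

theorem distM_eq_aeval_distPoly (hG : IsDRG G D b c) :
    ∀ i ≤ D, distM G i = aeval (distM G 1) (distPoly b c i)
  | 0, _ => by simp [distPoly, hG.distM_zero]
  | 1, _ => by simp [distPoly]
  | i + 2, hi => by
    have hc : (c (i + 2) : ℝ) ≠ 0 := Nat.cast_ne_zero.2 (hG.c_succ_pos hi).ne'
    have hrec : distM G (i + 2) = (c (i + 2) : ℝ)⁻¹ • (distM G 1 * distM G (i + 1) -
        aInt b c (i + 1) • distM G (i + 1) - (b i : ℝ) • distM G i) := by
      rw [hG.distM_one_mul_distM_succ, eq_inv_smul_iff₀ hc]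
      abel
    rw [hrec, distPoly, hG.distM_eq_aeval_distPoly (i + 1) (by omega),
      hG.distM_eq_aeval_distPoly i (by omega)]
    simp [sub_mul, Algebra.smul_def]

theorem spectrum_qDist (hG : IsDRG G D b c) (q : ℝ) :
    spectrum ℝ (qDist G D q) = qDistEigenvalue b c D q '' spectrum ℝ (distM G 1) := by
  have haeval : qDist G D q = aeval (distM G 1)
      (∑ i ∈ Finset.Icc 1 D, C (∑ j ∈ Finset.range i, (1 / q) ^ j) * distPoly b c i) := by
    rw [qDist, map_sum]
    refine Finset.sum_congr rfl fun i hi => ?_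
    rw [hG.distM_eq_aeval_distPoly i (Finset.mem_Icc.1 hi).2, map_mul, aeval_C, Algebra.smul_def]
  rw [haeval, spectrum_aeval_of_isSelfAdjoint (distM_isSelfAdjoint G 1)]
  simp only [eval_finsetSum, eval_mul, eval_C]
  rfl

lemma mul_eval_distPoly_of_mem_spectrum (hG : IsDRG G (D + 1) b c) {θ : ℝ}
    (hθ : θ ∈ spectrum ℝ (distM G 1)) :
    (θ - aInt b c (D + 1)) * (distPoly b c (D + 1)).eval θ = b D * (distPoly b c D).eval θ := by
  have hzero : distM G (D + 2) = 0 := by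
    ext x y
    have := hG.dist_le x y
    simp only [distM, Matrix.of_apply, Matrix.zero_apply, ite_eq_right_iff]
    omega
  have hann : aeval (distM G 1) ((X - C (aInt b c (D + 1))) * distPoly b c (D + 1) -
      C (b D : ℝ) * distPoly b c D) = 0 := by
    simp only [map_sub, map_mul, aeval_X, aeval_C, sub_mul, ← Algebra.smul_def,
      ← hG.distM_eq_aeval_distPoly (D + 1) le_rfl, ← hG.distM_eq_aeval_distPoly D (by omega)]
    rw [hG.distM_one_mul_distM_succ, hzero]
    simp
  have := hG.connected.nonempty
  have hmem := spectrum.subset_polynomial_aeval (distM G 1) ((X - C (aInt b c (D + 1))) *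
    distPoly b c (D + 1) - C (b D : ℝ) * distPoly b c D) (Set.mem_image_of_mem _ hθ)
  rw [hann, spectrum.zero_eq, Set.mem_singleton_iff] at hmem
  simpa [sub_eq_zero] using hmem

end IsDRG

lemma IsAntipodalCover.ncard_dist_eq_diam_add_one [Finite W] (hcov : IsAntipodalCover G D r)
    (hD : D ≠ 0) (x : W) : {y | G.dist x y = D}.ncard + 1 = r := by
  have hx : x ∉ {y | G.dist x y = D} := by simpa using hD.symm
  rw [← Set.ncard_insert_of_notMem hx]
  exact hcov.2 x

namespace IsDRG

lemma b_eq_one_of_isAntipodal [Finite W] (hG : IsDRG G (D + 1) b c)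
    (hanti : IsAntipodal G (D + 1)) (hD : 2 ≤ D) : b D = 1 := by
  obtain ⟨x, y, hxy⟩ := hG.exists_dist_eq (Nat.le_succ D)
  refine le_antisymm ?_ (hG.b_pos (Nat.lt_succ_self D))
  rw [← hG.ncard_adj_dist_eq_succ hxy, Set.ncard_le_one]
  rintro z ⟨hyz, hxz⟩ w ⟨hyw, hxw⟩
  refine (hanti x z w hxz hxw).resolve_right fun hzw => ?_
  have htri := hG.connected.dist_triangle (u := z) (v := y) (w := w)
  rw [SimpleGraph.dist_eq_one_iff_adj.2 hyz.symm, SimpleGraph.dist_eq_one_iff_adj.2 hyw] at htri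
  omega

lemma c_diam_eq_of_isAntipodal (hG : IsDRG G (D + 1) b c) (hanti : IsAntipodal G (D + 1))
    (hD : 1 ≤ D) : c (D + 1) = b 0 := by
  obtain ⟨x, y, hxy⟩ := hG.exists_dist_eq le_rfl
  rw [← hG.ncard_adj_dist_eq_pred hxy, ← hG.ncard_adj y]
  congr 1
  ext z
  refine ⟨And.left, fun hyz => ⟨hyz, ?_⟩⟩
  have hyz_dist := SimpleGraph.dist_eq_one_iff_adj.2 hyz
  have hxz_ne : G.dist x z ≠ D + 1 := fun hxz =>
    (hanti x y z hxy hxz).elim hyz.ne (by omega)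
  have hxz_le := hG.dist_le x z
  have := hyz.diff_dist_adj (u := x)
  omega

lemma b_one_add_c_two_eq [Finite W] (hG : IsDRG G 3 b c) (hcov : IsAntipodalCover G 3 r) :
    b 1 + c 2 = c 2 * r := by
  obtain ⟨x⟩ := hG.connected.nonempty
  have hsphere_one : {y | G.dist x y = 1}.ncard = b 0 := by
    simpa using hG.ncard_adj x
  have hone := hG.ncard_sphere_mul x 1
  have htwo := hG.ncard_sphere_mul x 2
  have hthree := hcov.ncard_dist_eq_diam_add_one (by norm_num) x
  rw [hG.b_eq_one_of_isAntipodal hcov.1 le_rfl,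
    hG.c_diam_eq_of_isAntipodal hcov.1 one_le_two, mul_one] at htwo
  rw [hsphere_one, htwo] at hone
  apply Nat.eq_of_mul_eq_mul_left (hG.b_pos three_pos)
  rw [← hthree]
  linear_combination hone

end IsDRG

end DistanceRegular

/-- The numbers `b, c` form the intersection array `{k, c₂(r - 1), 1; 1, c₂, k}` of an antipodal
`r`-cover of diameter 3. The entry `b₁ = c₂(r - 1)` is stated without truncated subtraction. -/
structure IsAntipodalCoverArray (b c : ℕ → ℕ) (r : ℕ) : Prop where
  b_zero_pos : 0 < b 0
  b_one_add_c_two : b 1 + c 2 = c 2 * r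
  b_two : b 2 = 1
  b_three : b 3 = 0
  c_one : c 1 = 1
  c_two_pos : 0 < c 2
  c_three : c 3 = b 0

lemma IsDRG.isAntipodalCoverArray {W : Type*} [Finite W] {G : SimpleGraph W} {b c : ℕ → ℕ} {r : ℕ}
    (hG : IsDRG G 3 b c) (hcov : IsAntipodalCover G 3 r) : IsAntipodalCoverArray b c r where
  b_zero_pos := hG.b_pos three_pos
  b_one_add_c_two := hG.b_one_add_c_two_eq hcov
  b_two := hG.b_eq_one_of_isAntipodal hcov.1 le_rfl
  b_three := hG.b_diam
  c_one := hG.2.2.2.1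
  c_two_pos := hG.c_succ_pos (by norm_num)
  c_three := hG.c_diam_eq_of_isAntipodal hcov.1 one_le_two

/-- The quadratic `θ² + (c₂ - a₁)θ - k`, whose roots are the eigenvalues `θ₁` and `θ₃` of an
antipodal cover of diameter 3. -/
noncomputable def coverQuadratic (b c : ℕ → ℕ) (θ : ℝ) : ℝ :=
  θ ^ 2 + (c 2 - aInt b c 1) * θ - b 0

lemma middle_eq_of_quadratic_neg {p s m x y z : ℝ} (hp : p ^ 2 + s * p - m < 0) (hxy : y < x)
    (hyz : z < y) (hx : x = p ∨ x ^ 2 + s * x - m = 0) (hy : y = p ∨ y ^ 2 + s * y - m = 0)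
    (hz : z = p ∨ z ^ 2 + s * z - m = 0) :
    y = p ∧ x ^ 2 + s * x - m = 0 ∧ z ^ 2 + s * z - m = 0 := by
  have between {u v : ℝ} (huv : v < u) (hu : u ^ 2 + s * u - m = 0)
      (hv : v ^ 2 + s * v - m = 0) : v < p ∧ p < u := by
    have hsum : u + v + s = 0 :=
      mul_left_cancel₀ (sub_ne_zero.2 huv.ne') (by linear_combination hu - hv)
    have hprod : (p - u) * (p - v) < 0 := by
      convert hp using 1
      linear_combination (u - p) * hsum - hu
    rcases mul_neg_iff.1 hprod with ⟨hu_lt, hv_gt⟩ | ⟨hu_gt, hv_lt⟩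
    · linarith
    · exact ⟨sub_pos.1 hv_lt, sub_neg.1 hu_gt⟩
  have hyp : y = p := by
    by_contra hne
    have hy_root := hy.resolve_left hne
    have hx_or : x = p ∨ y < p := hx.imp_right fun h => (between hxy h hy_root).1
    have hz_or : z = p ∨ p < y := hz.imp_right fun h => (between hyz hy_root h).2
    rcases hx_or with h | h <;> rcases hz_or with h' | h' <;> linarith
  subst hyp
  exact ⟨rfl, hx.resolve_left hxy.ne', hz.resolve_left hyz.ne⟩

lemma one_add_one_div_nonneg {q : ℝ} (hq : q ≤ -1) : 0 ≤ 1 + 1 / q := by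
  have hdiv := one_div_le_one_div_of_neg_of_le (by norm_num) hq
  linarith

namespace IsAntipodalCoverArray

variable {b c : ℕ → ℕ} {r : ℕ} {q θ θ' : ℝ}

lemma r_pos (h : IsAntipodalCoverArray b c r) : 0 < r := by
  refine Nat.pos_of_ne_zero fun hr => ?_
  have hb := h.b_one_add_c_two
  have hc := h.c_two_pos
  rw [hr, mul_zero] at hb
  omega

lemma aInt_one (h : IsAntipodalCoverArray b c r) : aInt b c 1 = b 0 - 1 - c 2 * (r - 1) := by
  have hb : (b 1 + c 2 : ℝ) = c 2 * r := mod_cast h.b_one_add_c_two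
  rw [aInt, h.c_one]
  push_cast
  linear_combination -hb

lemma coverQuadratic_neg_one (h : IsAntipodalCoverArray b c r) :
    coverQuadratic b c (-1) = -(c 2 * r) := by
  rw [coverQuadratic, h.aInt_one]
  ring

lemma coverQuadratic_neg_one_neg (h : IsAntipodalCoverArray b c r) :
    coverQuadratic b c (-1) < 0 := by
  have hpos := Nat.mul_pos h.c_two_pos h.r_pos
  rw [h.coverQuadratic_neg_one, neg_lt_zero]
  exact_mod_cast hpos

lemma coverQuadratic_valency (h : IsAntipodalCoverArray b c r) :
    coverQuadratic b c (b 0) = b 0 * (c 2 * r) := by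
  rw [coverQuadratic, h.aInt_one]
  ring

lemma eval_distPoly_two (h : IsAntipodalCoverArray b c r) (θ : ℝ) :
    (distPoly b c 2).eval θ = coverQuadratic b c θ / c 2 - θ := by
  have hc : (c 2 : ℝ) ≠ 0 := Nat.cast_ne_zero.2 h.c_two_pos.ne'
  simp only [distPoly, coverQuadratic, eval_mul, eval_sub, eval_C, eval_X, eval_one]
  field_simp
  ring

lemma eval_distPoly_three (h : IsAntipodalCoverArray b c r) (θ : ℝ) :
    (distPoly b c 3).eval θ = coverQuadratic b c θ * (θ + 1 - b 0) / (c 2 * b 0) - 1 := by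
  have hc : (c 2 : ℝ) ≠ 0 := Nat.cast_ne_zero.2 h.c_two_pos.ne'
  have hk : (b 0 : ℝ) ≠ 0 := Nat.cast_ne_zero.2 h.b_zero_pos.ne'
  have hb : (b 1 : ℝ) = c 2 * r - c 2 := eq_sub_of_add_eq (mod_cast h.b_one_add_c_two)
  have ha : aInt b c 2 = b 0 - 1 - c 2 := by simp [aInt, h.b_two]
  rw [distPoly, h.c_three]
  simp only [eval_mul, eval_sub, eval_C, eval_X, eval_one, distPoly, Nat.reduceAdd, ha, hb,
    coverQuadratic, h.aInt_one]
  field_simp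
  ring

lemma eq_or_coverQuadratic_eq_zero {W : Type*} [Fintype W] [DecidableEq W] {G : SimpleGraph W}
    (h : IsAntipodalCoverArray b c r) (hG : IsDRG G 3 b c)
    (hθ : θ ∈ spectrum ℝ (distM G 1)) (hk : θ ≠ b 0) : θ = -1 ∨ coverQuadratic b c θ = 0 := by
  have hc : (c 2 : ℝ) ≠ 0 := Nat.cast_ne_zero.2 h.c_two_pos.ne'
  have hk0 : (b 0 : ℝ) ≠ 0 := Nat.cast_ne_zero.2 h.b_zero_pos.ne'
  have ha : aInt b c 3 = 0 := by simp [aInt, h.b_three, h.c_three]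
  have hann := hG.mul_eval_distPoly_of_mem_spectrum hθ
  rw [ha, h.b_two, h.eval_distPoly_two, h.eval_distPoly_three] at hann
  field_simp at hann
  have hfactor : (θ - b 0) * ((θ + 1) * coverQuadratic b c θ) = 0 := by
    linear_combination hann
  rcases mul_eq_zero.1 ((mul_eq_zero.1 hfactor).resolve_left (sub_ne_zero.2 hk)) with h1 | h1
  · exact Or.inl (eq_neg_of_add_eq_zero_left h1)
  · exact Or.inr h1

lemma qDistEigenvalue_eq (h : IsAntipodalCoverArray b c r) (q θ : ℝ) :
    qDistEigenvalue b c 3 q θ = θ + (1 + 1 / q) * (coverQuadratic b c θ / c 2 - θ) +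
      (1 + 1 / q + (1 / q) ^ 2) *
        (coverQuadratic b c θ * (θ + 1 - b 0) / (c 2 * b 0) - 1) := by
  simp only [qDistEigenvalue, Finset.sum_Icc_succ_top, Nat.reduceLeDiff, Nat.reduceAdd,
    Finset.Icc_self, Finset.sum_singleton, Finset.sum_range_succ, Finset.sum_range_zero, pow_zero,
    pow_one, zero_add, one_mul, h.eval_distPoly_two, h.eval_distPoly_three]
  simp [distPoly]

lemma qDistEigenvalue_of_root (h : IsAntipodalCoverArray b c r) (hθ : coverQuadratic b c θ = 0) :
    qDistEigenvalue b c 3 q θ = -(1 / q) * θ - (1 + 1 / q + (1 / q) ^ 2) := by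
  rw [h.qDistEigenvalue_eq, hθ]
  ring

lemma qDistEigenvalue_neg_one (h : IsAntipodalCoverArray b c r) :
    qDistEigenvalue b c 3 q (-1) = (1 / q) ^ 2 * (r - 1) - 1 := by
  have hc : (c 2 : ℝ) ≠ 0 := Nat.cast_ne_zero.2 h.c_two_pos.ne'
  have hk : (b 0 : ℝ) ≠ 0 := Nat.cast_ne_zero.2 h.b_zero_pos.ne'
  rw [h.qDistEigenvalue_eq, h.coverQuadratic_neg_one]
  field_simp
  ring

lemma qDistEigenvalue_valency (h : IsAntipodalCoverArray b c r) :
    qDistEigenvalue b c 3 q (b 0) =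
      b 0 + (1 + 1 / q) * (b 0 * (r - 1)) + (1 + 1 / q + (1 / q) ^ 2) * (r - 1) := by
  have hc : (c 2 : ℝ) ≠ 0 := Nat.cast_ne_zero.2 h.c_two_pos.ne'
  have hk : (b 0 : ℝ) ≠ 0 := Nat.cast_ne_zero.2 h.b_zero_pos.ne'
  rw [h.qDistEigenvalue_eq, h.coverQuadratic_valency]
  field_simp
  ring

lemma qDistEigenvalue_lt_of_root_lt (h : IsAntipodalCoverArray b c r) (hq : q < 0)
    (hθ : coverQuadratic b c θ = 0) (hθ' : coverQuadratic b c θ' = 0) (hlt : θ < θ') :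
    qDistEigenvalue b c 3 q θ < qDistEigenvalue b c 3 q θ' := by
  rw [h.qDistEigenvalue_of_root hθ, h.qDistEigenvalue_of_root hθ', sub_lt_sub_iff_right]
  exact mul_lt_mul_of_pos_left hlt (neg_pos.2 (one_div_neg.2 hq))

lemma qDistEigenvalue_lt_neg_one (h : IsAntipodalCoverArray b c r) (hq : q < 0)
    (hθ : coverQuadratic b c θ = 0) (hlt : θ < -1) :
    qDistEigenvalue b c 3 q θ < qDistEigenvalue b c 3 q (-1) := by
  rw [h.qDistEigenvalue_of_root hθ, h.qDistEigenvalue_neg_one]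
  have hprod : 0 < 1 / q * (θ + 1) := mul_pos_of_neg_of_neg (one_div_neg.2 hq) (by linarith)
  have hsq : 0 ≤ (1 / q) ^ 2 * r := by positivity
  linarith

lemma qDistEigenvalue_lt_valency (h : IsAntipodalCoverArray b c r) (hq : q ≤ -1)
    (hθ : coverQuadratic b c θ = 0) (hlt : θ < b 0) :
    qDistEigenvalue b c 3 q θ < qDistEigenvalue b c 3 q (b 0) := by
  rw [h.qDistEigenvalue_of_root hθ, h.qDistEigenvalue_valency]
  have hneg : 1 / q < 0 := one_div_neg.2 (by linarith)
  have hone := one_add_one_div_nonneg hq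
  have hgap : 0 < -(1 / q) * (b 0 - θ) := mul_pos (neg_pos.2 hneg) (sub_pos.2 hlt)
  have hvalency : 0 ≤ (1 + 1 / q) * (b 0 * r) := by positivity
  have hclass : 0 ≤ (1 + 1 / q + (1 / q) ^ 2) * r := by positivity
  linarith

lemma qDistEigenvalue_neg_one_lt_valency (h : IsAntipodalCoverArray b c r) (hq : q ≤ -1) :
    qDistEigenvalue b c 3 q (-1) < qDistEigenvalue b c 3 q (b 0) := by
  rw [h.qDistEigenvalue_neg_one, h.qDistEigenvalue_valency]
  have hone := one_add_one_div_nonneg hq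
  have hr : (0 : ℝ) ≤ r - 1 := sub_nonneg.2 (mod_cast h.r_pos)
  have hnonneg : 0 ≤ (1 + 1 / q) * ((b 0 + 1) * (r - 1)) := by positivity
  have hk : (0 : ℝ) < b 0 := mod_cast h.b_zero_pos
  linarith

lemma qDistEigenvalue_eq_neg_one_iff (h : IsAntipodalCoverArray b c r) (hq : q ≠ 0)
    (hθ : coverQuadratic b c θ = 0) :
    qDistEigenvalue b c 3 q θ = qDistEigenvalue b c 3 q (-1) ↔ θ = -(r : ℝ) / q - 1 := by
  rw [h.qDistEigenvalue_of_root hθ, h.qDistEigenvalue_neg_one]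
  have hfactor : -(1 / q) * θ - (1 + 1 / q + (1 / q) ^ 2) - ((1 / q) ^ 2 * (r - 1) - 1) =
      -(1 / q) * (θ - (-(r : ℝ) / q - 1)) := by ring
  rw [← sub_eq_zero, hfactor, mul_eq_zero, sub_eq_zero,
    or_iff_right (neg_ne_zero.2 (one_div_ne_zero hq))]

end IsAntipodalCoverArray

lemma ncard_eq_three_iff {α : Type*} {w x y z : α} (hwx : w ≠ x) (hwy : w ≠ y) (hwz : w ≠ z)
    (hxz : x ≠ z) (hyz : y ≠ z) : ({w, x, y, z} : Set α).ncard = 3 ↔ x = y := by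
  classical
  simp [Set.ncard_insert_eq_ite, hwx, hwy, hwz, hxz, hyz]

/-- Proposition 3.10(2): an antipodal distance-regular graph of diameter
3 which is an antipodal `r`-cover, with distinct adjacency eigenvalues `k > θ₁ > θ₂ > θ₃`,
has exactly three distinct `q`-distance eigenvalues for `q ≤ −1` if and only if
`θ₁ = −r/q − 1`. -/
theorem stmt15 (G : SimpleGraph V) (b c : ℕ → ℕ) (r : ℕ) (hG : IsDRG G 3 b c)
    (hcov : IsAntipodalCover G 3 r)
    (θ₁ θ₂ θ₃ : ℝ) (h1 : (b 0 : ℝ) > θ₁) (h2 : θ₁ > θ₂) (h3 : θ₂ > θ₃)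
    (hspec : spectrum ℝ (distM G 1) = ({(b 0 : ℝ), θ₁, θ₂, θ₃} : Set ℝ))
    (q : ℝ) (hq : q ≤ -1) :
    (spectrum ℝ (qDist G 3 q)).ncard = 3 ↔ θ₁ = -(r : ℝ) / q - 1 := by
  have harr := hG.isAntipodalCoverArray hcov
  have hroot {θ : ℝ} (hθ : θ ∈ ({(b 0 : ℝ), θ₁, θ₂, θ₃} : Set ℝ)) (hlt : θ < b 0) :=
    harr.eq_or_coverQuadratic_eq_zero hG (hspec ▸ hθ) hlt.ne
  obtain ⟨rfl, hroot₁, hroot₃⟩ := middle_eq_of_quadratic_neg harr.coverQuadratic_neg_one_neg h2 h3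
    (hroot (by simp) h1) (hroot (by simp) (by linarith)) (hroot (by simp) (by linarith))
  have hq0 : q < 0 := by linarith
  rw [hG.spectrum_qDist, hspec, Set.image_insert_eq, Set.image_insert_eq, Set.image_pair,
    ncard_eq_three_iff (harr.qDistEigenvalue_lt_valency hq hroot₁ h1).ne'
      (harr.qDistEigenvalue_neg_one_lt_valency hq).ne'
      (harr.qDistEigenvalue_lt_valency hq hroot₃ (by linarith)).ne'
      (harr.qDistEigenvalue_lt_of_root_lt hq0 hroot₃ hroot₁ (h3.trans h2)).ne'
      (harr.qDistEigenvalue_lt_neg_one hq0 hroot₃ h3).ne']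
  exact harr.qDistEigenvalue_eq_neg_one_iff hq0.ne hroot₁
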